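/- Let N, k, t be positive integers with t·k ≤ N, and let Q⁽ʲ⁾ : (ℝᵏ)^{j−1} → ℝ^{k×N}, j = 1,…,t, be measurable maps (Q⁽¹⁾ constant) such that for every history h = (r⁽¹⁾,…,r⁽ʲ⁻¹⁾) the rows of Q⁽ʲ⁾(h) are orthonormal and orthogonal to the rows of Q⁽ⁱ⁾(r⁽¹⁾,…,r⁽ⁱ⁻¹⁾) for all i < j. Fix a ∈ ℝ^N. Define random vectors x⁽¹⁾,…,x⁽ᵗ⁾ recursively by x⁽ʲ⁾ = Q⁽ʲ⁾(x⁽¹⁾,…,x⁽ʲ⁻¹⁾)·a + g⁽ʲ⁾, where g⁽¹⁾,…,g⁽ᵗ⁾ are i.i.d. standard Gaussian vectors in ℝᵏ; and define y⁽¹⁾,…,y⁽ᵗ⁾ recursively by y⁽ʲ⁾ = Q⁽ʲ⁾(y⁽¹⁾,…,y⁽ʲ⁻¹⁾)·(a + g), where g is a standard Gaussian vector in ℝ^N. Then the tuples (x⁽¹⁾,…,x⁽ᵗ⁾) and (y⁽¹⁾,…,y⁽ᵗ⁾) have the same joint distribution on (ℝᵏ)ᵗ. -/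

import Mathlib

/-!
The proof is by induction on the number of rounds, peeling off the first one. Let `P` be the first
query matrix. A standard Gaussian vector in `ℝ^N` can be written as `Pᵀ w + (1 - PᵀP) u` with `w`
and `u` independent standard Gaussians in `ℝᵏ` and `ℝ^N`, because the covariance of this sum is
`PᵀP + (1 - PᵀP)² = 1`. With the input perturbed in this way, the first exact response is `P a + w`,
which is also the first noisy response with noise `w`. All later queries are orthogonal to the rows
of `P`, so they see the perturbed input as `a + u`. Conditionally on `w`, what remains is therefore
the algorithm of the remaining rounds on `a + u`, to which the induction hypothesis applies.
-/

open MeasureTheory ProbabilityTheory Matrix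
open scoped ENNReal Classical

noncomputable section

/-- Squared Euclidean norm of a finitely-indexed real vector. -/
def sqNorm {ι : Type*} [Fintype ι] (x : ι → ℝ) : ℝ := ∑ i, x i ^ 2

/-- Squared Frobenius norm of a real matrix. -/
def frobSq {m n : Type*} [Fintype m] [Fintype n] (A : Matrix m n ℝ) : ℝ :=
  ∑ i, ∑ j, A i j ^ 2

/-- Spectral (ℓ₂ operator) norm of a real matrix. -/
def specNorm {m n : Type*} [Fintype m] [Fintype n] (A : Matrix m n ℝ) : ℝ :=
  sSup ((fun x : n → ℝ => Real.sqrt (sqNorm (A.mulVec x))) '' {x | sqNorm x ≤ 1})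

/-- `i`-th largest singular value (1-based), characterized via
`σ_i(A) = min {‖A − X‖ : rank X ≤ i − 1}`. -/
def singVal {m n : Type*} [Fintype m] [Fintype n] (A : Matrix m n ℝ) (i : ℕ) : ℝ :=
  sInf {c | ∃ X : Matrix m n ℝ, X.rank ≤ i - 1 ∧ c = specNorm (A - X)}

/-- Flattening of an `n × n` matrix into a vector in `ℝ^{n²}`. -/
def vec (n : ℕ) (A : Matrix (Fin n) (Fin n) ℝ) : Fin (n * n) → ℝ :=
  fun i => A (finProdFinEquiv.symm i).1 (finProdFinEquiv.symm i).2

/-- `u ⊗ v = vec (u vᵀ) ∈ ℝ^{n²}`. -/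
def tensor {n : ℕ} (u v : Fin n → ℝ) : Fin (n * n) → ℝ :=
  vec n (Matrix.of fun i j => u i * v j)

/-- Standard Gaussian measure on `ι → ℝ`. -/
def stdGaussian (ι : Type*) [Fintype ι] : Measure (ι → ℝ) :=
  Measure.pi fun _ => gaussianReal 0 1

/-- Standard Gaussian measure on `n × n` matrices (as `Fin n → Fin n → ℝ`). -/
def stdGaussianMat (n : ℕ) : Measure (Fin n → Fin n → ℝ) :=
  Measure.pi fun _ => stdGaussian (Fin n)

/-- Query maps of a deterministic `t`-round adaptive algorithm making `k` linear
measurements per round on inputs in `ℝ^N`. -/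
def QueryMaps (N k t : ℕ) : Type :=
  (j : Fin t) → (Fin (j : ℕ) → (Fin k → ℝ)) → Matrix (Fin k) (Fin N) ℝ

namespace QueryMaps

variable {N k t : ℕ}

/-- Restriction of a round-`j` history to the first `i` rounds. -/
def prefixHist {j : Fin t} (h : Fin (j : ℕ) → Fin k → ℝ) {i : Fin t}
    (hij : (i : ℕ) < (j : ℕ)) : Fin (i : ℕ) → Fin k → ℝ :=
  fun l => h ⟨l.1, l.isLt.trans hij⟩

/-- Validity of query maps: measurability, orthonormal rows within each round, and
orthogonality across rounds along consistent histories. -/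
def Valid (Q : QueryMaps N k t) : Prop :=
  (∀ (j : Fin t) (i : Fin k) (l : Fin N), Measurable fun h => Q j h i l) ∧
  (∀ (j : Fin t) (h : Fin (j : ℕ) → Fin k → ℝ), Q j h * (Q j h)ᵀ = 1) ∧
  (∀ (j i : Fin t) (hij : (i : ℕ) < (j : ℕ)) (h : Fin (j : ℕ) → Fin k → ℝ),
      Q j h * (Q i (prefixHist h hij))ᵀ = 0)

/-- Responses of the algorithm under exact linear measurements of `a`. -/
def resp (Q : QueryMaps N k t) (a : Fin N → ℝ) (j : Fin t) : Fin k → ℝ :=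
  (Q j fun i => resp Q a ⟨i.1, i.isLt.trans j.isLt⟩).mulVec a
termination_by (j : ℕ)
decreasing_by exact i.isLt

/-- Responses of the algorithm under noisy linear measurements of `a`, with fresh
per-round noise `g`. -/
def nresp (Q : QueryMaps N k t) (a : Fin N → ℝ) (g : Fin t → Fin k → ℝ) (j : Fin t) :
    Fin k → ℝ :=
  ((Q j fun i => nresp Q a g ⟨i.1, i.isLt.trans j.isLt⟩).mulVec a) + g j
termination_by (j : ℕ)
decreasing_by exact i.isLt

/-- The `tk × N` matrix stacking all the query matrices realized along the run of the
algorithm on input `a` (exact measurements). -/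
def runMat (Q : QueryMaps N k t) (a : Fin N → ℝ) : Matrix (Fin t × Fin k) (Fin N) ℝ :=
  Matrix.of fun p l =>
    Q p.1 (fun i => resp Q a ⟨i.1, i.isLt.trans p.1.isLt⟩) p.2 l

end QueryMaps

/-- Kullback–Leibler divergence, valued in `[0, ∞]`, defined with the natural
logarithm. -/
def klDiv {Ω : Type*} [MeasurableSpace Ω] (P Q : Measure Ω) : ℝ≥0∞ :=
  if P ≪ Q ∧ Integrable (fun x => Real.log ((P.rnDeriv Q x).toReal)) P then
    ENNReal.ofReal (∫ x, Real.log ((P.rnDeriv Q x).toReal) ∂P)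
  else ⊤


/-- The rank-`r` plant `Σ_{i=1}^r uᵢ vᵢᵀ` built from the rows of `U` and `V`. -/
def plant {n r : ℕ} (U V : Fin r → Fin n → ℝ) : Matrix (Fin n) (Fin n) ℝ :=
  Matrix.of fun i j => ∑ l, U l i * V l j

/-- Schatten-`p` norm (real `p`), via the singular values. -/
def schattenNorm {n : ℕ} (p : ℝ) (A : Matrix (Fin n) (Fin n) ℝ) : ℝ :=
  (∑ i ∈ Finset.range n, singVal A (i + 1) ^ p) ^ (1 / p)

/-- Ky-Fan `p` norm: sum of the `p` largest singular values. -/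
def kyFanNorm {n : ℕ} (p : ℕ) (A : Matrix (Fin n) (Fin n) ℝ) : ℝ :=
  ∑ i ∈ Finset.range p, singVal A (i + 1)

theorem identDistrib_comp_of_measurePreserving {α β γ : Type*} [MeasurableSpace α]
    [MeasurableSpace β] [MeasurableSpace γ] {μ : Measure α} {ν : Measure β} {T : α → β}
    (hT : MeasurePreserving T μ ν) {f : β → γ} (hf : Measurable f) :
    IdentDistrib (f ∘ T) f μ ν where
  aemeasurable_fst := (hf.comp hT.measurable).aemeasurable
  aemeasurable_snd := hf.aemeasurable
  map_eq := by rw [← hT.map_eq, Measure.map_map hf hT.measurable]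

theorem identDistrib_prod_of_forall_left {α β γ δ : Type*} [MeasurableSpace α] [MeasurableSpace β]
    [MeasurableSpace γ] [MeasurableSpace δ] {μ : Measure α} {ν : Measure β} {ρ : Measure γ}
    [SFinite ν] [SFinite ρ] {f : α × β → δ} {g : α × γ → δ} (hf : Measurable f)
    (hg : Measurable g) (h : ∀ x, IdentDistrib (fun y => f (x, y)) (fun z => g (x, z)) ν ρ) :
    IdentDistrib f g (μ.prod ν) (μ.prod ρ) := by
  refine ⟨hf.aemeasurable, hg.aemeasurable, Measure.ext fun s hs => ?_⟩
  rw [Measure.map_apply hf hs, Measure.map_apply hg hs, Measure.prod_apply (hf hs),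
    Measure.prod_apply (hg hs)]
  exact lintegral_congr fun x => (h x).measure_mem_eq hs

section FinCons

variable {n : ℕ} {α : Fin (n + 1) → Type*} [∀ i, MeasurableSpace (α i)]

theorem measurePreserving_finCons (μ : ∀ i, Measure (α i)) [∀ i, SigmaFinite (μ i)] :
    MeasurePreserving (fun p : α 0 × (∀ i : Fin n, α i.succ) => (Fin.cons p.1 p.2 : ∀ i, α i))
      ((μ 0).prod (Measure.pi fun i => μ i.succ)) (Measure.pi μ) := by
  have hcons : (fun p : α 0 × (∀ i : Fin n, α i.succ) => (Fin.cons p.1 p.2 : ∀ i, α i)) =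
      (MeasurableEquiv.piFinSuccAbove α 0).symm :=
    funext fun p => (Fin.insertNth_zero p.1 p.2).symm
  rw [hcons]
  exact (measurePreserving_piFinSuccAbove μ 0).symm

theorem measurable_finCons (x : α 0) :
    Measurable (Fin.cons x : (∀ i : Fin n, α i.succ) → ∀ i, α i) := by
  refine measurable_pi_lambda _ fun i => ?_
  cases i using Fin.cases with
  | zero => exact measurable_const
  | succ i => exact measurable_pi_apply i

end FinCons

instance isProbabilityMeasure_stdGaussian_pi (ι : Type*) [Fintype ι] :
    IsProbabilityMeasure (stdGaussian ι) := by
  unfold _root_.stdGaussian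
  infer_instance

section Gaussian

variable {ι κ m : Type*} [Fintype ι] [Fintype κ] [Fintype m]

theorem charFunDual_stdGaussian_pi [DecidableEq ι] (L : StrongDual ℝ (ι → ℝ)) :
    charFunDual (stdGaussian ι) L = Complex.exp (-(∑ i, L (Pi.single i 1) ^ 2 : ℝ) / 2) := by
  have charFunDual_gaussianReal (M : StrongDual ℝ ℝ) :
      charFunDual (gaussianReal 0 1) M = Complex.exp (-(M 1 ^ 2 : ℝ) / 2) := by
    have hM : (InnerProductSpace.toDual ℝ ℝ).symm M = M 1 := by
      simpa using InnerProductSpace.toDual_symm_apply (x := (1 : ℝ)) (y := M)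
    rw [← charFun_toDual_symm_eq_charFunDual, hM, charFun_gaussianReal]
    simp [neg_div]
  simp_rw [_root_.stdGaussian, charFunDual_pi, charFunDual_gaussianReal, ← Complex.exp_sum]
  simp [Finset.sum_div, neg_div]

theorem measurePreserving_mulVec_stdGaussian [DecidableEq κ] (A : Matrix κ ι ℝ)
    (hA : A * Aᵀ = 1) :
    MeasurePreserving (A *ᵥ ·) (stdGaussian ι) (stdGaussian κ) := by
  refine ⟨by fun_prop, ?_⟩
  have := Measure.isProbabilityMeasure_map (μ := stdGaussian ι) (f := (A *ᵥ ·)) (by fun_prop)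
  refine Measure.ext_of_charFunDual (funext fun L => ?_)
  let c : κ → ℝ := fun i => L (Pi.single i 1)
  have hL (v : κ → ℝ) : L v = c ⬝ᵥ v := by
    conv_lhs => rw [pi_eq_sum_univ' v]
    simp [c, dotProduct, mul_comm]
  have hnorm : (c ᵥ* A) ⬝ᵥ (c ᵥ* A) = c ⬝ᵥ c := by
    rw [← dotProduct_mulVec, ← mulVec_transpose, mulVec_mulVec, hA, one_mulVec]
  have hsum : ∑ j, L (A *ᵥ Pi.single j 1) ^ 2 = ∑ i, L (Pi.single i 1) ^ 2 := by
    simp_rw [hL, dotProduct_mulVec, dotProduct_single_one, pow_two]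
    exact hnorm
  calc charFunDual ((stdGaussian ι).map (A *ᵥ ·)) L
      = charFunDual (stdGaussian ι) (L.comp A.mulVecLin.toContinuousLinearMap) :=
        charFunDual_map A.mulVecLin.toContinuousLinearMap L
    _ = charFunDual (stdGaussian κ) L := by
        rw [charFunDual_stdGaussian_pi, charFunDual_stdGaussian_pi, ← hsum]
        rfl

theorem measurePreserving_mulVec_add_mulVec_stdGaussian [DecidableEq m] (A : Matrix m ι ℝ)
    (B : Matrix m κ ℝ) (h : A * Aᵀ + B * Bᵀ = 1) :
    MeasurePreserving (fun p : (ι → ℝ) × (κ → ℝ) => A *ᵥ p.1 + B *ᵥ p.2)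
      ((stdGaussian ι).prod (stdGaussian κ)) (stdGaussian m) := by
  have hAB : fromCols A B * (fromCols A B)ᵀ = 1 := by
    rw [transpose_fromCols, fromCols_mul_fromRows, h]
  convert (measurePreserving_mulVec_stdGaussian _ hAB).comp
    (measurePreserving_sumPiEquivProdPi_symm fun _ : ι ⊕ κ => gaussianReal 0 1) using 1
  · exact funext fun p => (fromCols_mulVec_sumElim A B p.1 p.2).symm
  · rfl

theorem measurePreserving_transpose_mulVec_add_stdGaussian [DecidableEq ι] [DecidableEq κ]
    (P : Matrix κ ι ℝ) (hP : P * Pᵀ = 1) :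
    MeasurePreserving (fun p : (κ → ℝ) × (ι → ℝ) => Pᵀ *ᵥ p.1 + (1 - Pᵀ * P) *ᵥ p.2)
      ((stdGaussian κ).prod (stdGaussian ι)) (stdGaussian ι) := by
  refine measurePreserving_mulVec_add_mulVec_stdGaussian Pᵀ (1 - Pᵀ * P) ?_
  have hidem : Pᵀ * P * (Pᵀ * P) = Pᵀ * P := by
    rw [Matrix.mul_assoc, ← Matrix.mul_assoc P, hP, Matrix.one_mul]
  simp [Matrix.sub_mul, Matrix.mul_sub, hidem]

end Gaussian

namespace QueryMaps

variable {N k t : ℕ}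

theorem nresp_zero (Q : QueryMaps N k t) (a : Fin N → ℝ) : nresp Q a 0 = resp Q a := by
  funext j
  induction j using WellFoundedLT.induction with
  | ind j ih =>
    rw [nresp, resp, Pi.zero_apply, add_zero]
    congr 2
    exact funext fun i => ih _ (Fin.lt_def.2 i.isLt)

/-- The first query matrix. Its history is empty, so it is a constant. -/
def head (Q : QueryMaps N k (t + 1)) : Matrix (Fin k) (Fin N) ℝ :=
  Q 0 Fin.elim0

/-- The query maps of the remaining rounds once the first response is known to be `r`, as an
algorithm with one round fewer. -/
def tail (Q : QueryMaps N k (t + 1)) (r : Fin k → ℝ) : QueryMaps N k t :=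
  fun j h => Q j.succ (Fin.cons r h)

theorem nresp_eq_cons (Q : QueryMaps N k (t + 1)) (a : Fin N → ℝ) (g : Fin (t + 1) → Fin k → ℝ) :
    nresp Q a g = Fin.cons (Q.head *ᵥ a + g 0)
      (nresp (Q.tail (Q.head *ᵥ a + g 0)) a (Fin.tail g)) := by
  have hfirst : nresp Q a g 0 = Q.head *ᵥ a + g 0 := by
    rw [nresp, head]
    congr 3
    exact funext fun i => i.elim0
  funext j
  induction j using WellFoundedLT.induction with
  | ind j ih =>
    cases j using Fin.cases with
    | zero => exact hfirst
    | succ j =>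
      rw [nresp, Fin.cons_succ, nresp, tail]
      congr 3
      funext i
      cases i using Fin.cases with
      | zero => exact hfirst
      | succ i => exact ih ⟨i + 1, _⟩ (Nat.succ_lt_succ i.isLt)

theorem resp_eq_cons (Q : QueryMaps N k (t + 1)) (a : Fin N → ℝ) :
    resp Q a = Fin.cons (Q.head *ᵥ a) (resp (Q.tail (Q.head *ᵥ a)) a) := by
  simpa only [Pi.zero_apply, add_zero, show Fin.tail (0 : Fin (t + 1) → Fin k → ℝ) = 0 from rfl,
    nresp_zero] using nresp_eq_cons Q a 0

theorem resp_add_of_mulVec_eq_zero (Q : QueryMaps N k t) (a : Fin N → ℝ) {v : Fin N → ℝ}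
    (hv : ∀ j h, Q j h *ᵥ v = 0) : resp Q (a + v) = resp Q a := by
  funext j
  induction j using WellFoundedLT.induction with
  | ind j ih =>
    rw [resp, resp, mulVec_add, hv, add_zero]
    congr 2
    exact funext fun i => ih _ (Fin.lt_def.2 i.isLt)

theorem Valid.head_mul_transpose {Q : QueryMaps N k (t + 1)} (hQ : Q.Valid) :
    Q.head * Q.headᵀ = 1 :=
  hQ.2.1 0 _

theorem Valid.tail_mul_transpose_head {Q : QueryMaps N k (t + 1)} (hQ : Q.Valid) (r : Fin k → ℝ)
    (j : Fin t) (h : Fin j → Fin k → ℝ) : Q.tail r j h * Q.headᵀ = 0 := by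
  rw [head, Subsingleton.elim Fin.elim0
    (prefixHist (j := j.succ) (i := 0) (Fin.cons r h) j.succ_pos)]
  exact hQ.2.2 j.succ 0 j.succ_pos (Fin.cons r h)

theorem Valid.tail {Q : QueryMaps N k (t + 1)} (hQ : Q.Valid) (r : Fin k → ℝ) :
    (Q.tail r).Valid := by
  refine ⟨fun j i l => ?_, fun j h => hQ.2.1 j.succ _, fun j i hij h => ?_⟩
  · exact (hQ.1 j.succ i l).comp (measurable_finCons (α := fun _ => Fin k → ℝ) r)
  · have hprefix : (Fin.cons r (prefixHist h hij) : Fin (i + 1) → Fin k → ℝ) =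
        prefixHist (j := j.succ) (i := i.succ) (Fin.cons r h) (Nat.succ_lt_succ hij) := by
      funext l
      cases l using Fin.cases <;> rfl
    rw [QueryMaps.tail, QueryMaps.tail, hprefix]
    exact hQ.2.2 j.succ i.succ _ (Fin.cons r h)

theorem Valid.measurable_nresp_prod {Q : QueryMaps N k t} (hQ : Q.Valid) :
    Measurable fun p : (Fin N → ℝ) × (Fin t → Fin k → ℝ) => nresp Q p.1 p.2 := by
  refine measurable_pi_lambda _ fun j => ?_
  induction j using WellFoundedLT.induction with
  | ind j ih =>
    have hquery (i : Fin k) (l : Fin N) : Measurable fun p : (Fin N → ℝ) × (Fin t → Fin k → ℝ) =>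
        Q j (fun i => nresp Q p.1 p.2 ⟨i.1, i.isLt.trans j.isLt⟩) i l :=
      (hQ.1 j i l).comp (measurable_pi_lambda _ fun i => ih _ (Fin.lt_def.2 i.isLt))
    refine measurable_pi_lambda _ fun i => ?_
    simp_rw [nresp.eq_1 Q _ _ j, Pi.add_apply, mulVec, dotProduct]
    exact (Finset.measurable_sum _ fun l _ => (hquery i l).mul (by fun_prop)).add (by fun_prop)

theorem Valid.measurable_nresp {Q : QueryMaps N k t} (hQ : Q.Valid) (a : Fin N → ℝ) :
    Measurable (nresp Q a) :=
  hQ.measurable_nresp_prod.comp measurable_prodMk_left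

theorem Valid.measurable_resp_add {Q : QueryMaps N k t} (hQ : Q.Valid) (a : Fin N → ℝ) :
    Measurable fun g => resp Q (a + g) := by
  simp_rw [← nresp_zero]
  exact hQ.measurable_nresp_prod.comp ((measurable_const_add a).prodMk measurable_const)

theorem Valid.resp_add_eq_cons {Q : QueryMaps N k (t + 1)} (hQ : Q.Valid) (a u : Fin N → ℝ)
    (w : Fin k → ℝ) :
    resp Q (a + (Q.headᵀ *ᵥ w + (1 - Q.headᵀ * Q.head) *ᵥ u)) =
      Fin.cons (Q.head *ᵥ a + w) (resp (Q.tail (Q.head *ᵥ a + w)) (a + u)) := by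
  have hfirst : Q.head *ᵥ (a + (Q.headᵀ *ᵥ w + (1 - Q.headᵀ * Q.head) *ᵥ u)) =
      Q.head *ᵥ a + w := by
    simp [mulVec_add, Matrix.mul_sub, ← Matrix.mul_assoc, hQ.head_mul_transpose]
  have hlater : a + (Q.headᵀ *ᵥ w + (1 - Q.headᵀ * Q.head) *ᵥ u) =
      a + u + Q.headᵀ *ᵥ (w - Q.head *ᵥ u) := by
    simp only [sub_mulVec, one_mulVec, mulVec_sub, mulVec_mulVec]
    abel
  rw [resp_eq_cons, hfirst, hlater, resp_add_of_mulVec_eq_zero]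
  intro j h
  rw [mulVec_mulVec, hQ.tail_mul_transpose_head, zero_mulVec]

theorem Valid.identDistrib_nresp_resp_of_tail {Q : QueryMaps N k (t + 1)} (hQ : Q.Valid)
    (a : Fin N → ℝ)
    (htail : ∀ r, IdentDistrib (nresp (Q.tail r) a) (fun g => resp (Q.tail r) (a + g))
      (Measure.pi fun _ => stdGaussian (Fin k)) (stdGaussian (Fin N))) :
    IdentDistrib (nresp Q a) (fun g => resp Q (a + g))
      (Measure.pi fun _ => stdGaussian (Fin k)) (stdGaussian (Fin N)) := by
  have hnoise := measurePreserving_finCons fun _ : Fin (t + 1) => stdGaussian (Fin k)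
  have hinput := measurePreserving_transpose_mulVec_add_stdGaussian Q.head hQ.head_mul_transpose
  have hnresp := hQ.measurable_nresp a
  have hresp := hQ.measurable_resp_add a
  refine (identDistrib_comp_of_measurePreserving hnoise hnresp).symm.trans <|
    .trans ?_ (identDistrib_comp_of_measurePreserving hinput hresp)
  refine identDistrib_prod_of_forall_left (hnresp.comp hnoise.measurable)
    (hresp.comp hinput.measurable) fun w => ?_
  simp only [Function.comp_apply, nresp_eq_cons, Fin.cons_zero, Fin.tail_cons,
    hQ.resp_add_eq_cons a _ w]
  exact (htail _).comp (measurable_finCons (α := fun _ => Fin k → ℝ) _)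

end QueryMaps

/-- Adaptive orthonormal measurements with fresh Gaussian noise in each round are
distributionally equivalent to exact adaptive measurements of a once-perturbed input. -/
theorem noisy_measurements_eq_perturbed_input (N k t : ℕ)
    (hN : 0 < N) (hk : 0 < k) (ht : 0 < t) (htk : t * k ≤ N)
    (Q : QueryMaps N k t) (hQ : Q.Valid) (a : Fin N → ℝ) :
    Measure.map (fun g : Fin t → Fin k → ℝ => QueryMaps.nresp Q a g)
        (Measure.pi fun _ : Fin t => stdGaussian (Fin k)) =
      Measure.map (fun g : Fin N → ℝ => QueryMaps.resp Q (a + g))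
        (stdGaussian (Fin N)) := by
  clear ht htk
  suffices IdentDistrib (Q.nresp a) (fun g => Q.resp (a + g))
    (Measure.pi fun _ : Fin t => stdGaussian (Fin k)) (stdGaussian (Fin N)) from this.map_eq
  induction t with
  | zero =>
    refine ⟨(hQ.measurable_nresp a).aemeasurable, (hQ.measurable_resp_add a).aemeasurable, ?_⟩
    have hconst {α : Type} (x : α → Fin 0 → Fin k → ℝ) : x = fun _ => Fin.elim0 :=
      Subsingleton.elim _ _
    rw [hconst (Q.nresp a), hconst fun g => Q.resp (a + g)]
    simp only [Measure.map_const, measure_univ]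
  | succ t ih => exact hQ.identDistrib_nresp_resp_of_tail a fun r => ih (Q.tail r) (hQ.tail r)

end
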